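/- Let X₀ and X₁ be nonnegative random variables with equal finite positive mean a = E[X₀] = E[X₁]. Define F₀(λ) = E[e^{-λẊ₀}]/E[e^{-λX₀}] and F₁(λ) = E[e^{-λẊ₁}]/E[e^{-λX₁}], where Ẋᵢ is the Xᵢ-size-biased transform of Xᵢ. Then for all λ ≥ 0, |E[e^{-λX₀}] - E[e^{-λX₁}]| ≤ a ∫₀^λ |F₀(s) - F₁(s)| ds. -/

import Mathlib

open MeasureTheory ProbabilityTheory

/-- The law of the `X`-size-biased transform of a random variable with law `μ`
and mean `a`: `dν(x) = x dμ(x) / a`. -/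
noncomputable def sizeBiasedLaw (μ : Measure ℝ) (a : ℝ) : Measure ℝ :=
  (ENNReal.ofReal a)⁻¹ • μ.withDensity (fun x => ENNReal.ofReal x)

/-- Integration against the size-biased law of `X`. -/
theorem integral_sizeBiasedLaw_map {Ω : Type*} [MeasurableSpace Ω] {P : Measure Ω} {X : Ω → ℝ}
    (hX : Measurable X) (hX_nonneg : ∀ ω, 0 ≤ X ω) {a : ℝ} (ha : 0 < a)
    {f : ℝ → ℝ} (hf : Measurable f) :
    ∫ x, f x ∂(sizeBiasedLaw (P.map X) a) = a⁻¹ * ∫ ω, X ω * f (X ω) ∂P := by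
  rw [sizeBiasedLaw, integral_smul_measure,
    integral_withDensity_eq_integral_toReal_smul ENNReal.measurable_ofReal
      (Filter.Eventually.of_forall fun _ => ENNReal.ofReal_lt_top),
    integral_map hX.aemeasurable (by fun_prop), ENNReal.toReal_inv,
    ENNReal.toReal_ofReal ha.le]
  simp [hX_nonneg]

section Laplace

variable {Ω : Type*} [MeasurableSpace Ω] {P : Measure Ω} {X : Ω → ℝ}

theorem exp_neg_mul_le_one {s x : ℝ} (hs : 0 ≤ s) (hx : 0 ≤ x) : Real.exp (-s * x) ≤ 1 :=
  Real.exp_le_one_iff.2 (by nlinarith [mul_nonneg hs hx])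

theorem integrable_exp_neg_mul [IsProbabilityMeasure P] (hX : Measurable X)
    (hX_nonneg : ∀ ω, 0 ≤ X ω) {s : ℝ} (hs : 0 ≤ s) :
    Integrable (fun ω => Real.exp (-s * X ω)) P := by
  refine (integrable_const (1 : ℝ)).mono' (by fun_prop) (.of_forall fun ω => ?_)
  rw [Real.norm_of_nonneg (Real.exp_pos _).le]
  exact exp_neg_mul_le_one hs (hX_nonneg ω)

theorem integral_exp_neg_mul_pos [IsProbabilityMeasure P] (hX : Measurable X)
    (hX_nonneg : ∀ ω, 0 ≤ X ω) {s : ℝ} (hs : 0 ≤ s) :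
    0 < ∫ ω, Real.exp (-s * X ω) ∂P :=
  integral_exp_pos (integrable_exp_neg_mul hX hX_nonneg hs)

theorem integral_exp_neg_mul_le_one [IsProbabilityMeasure P] (hX : Measurable X)
    (hX_nonneg : ∀ ω, 0 ≤ X ω) {s : ℝ} (hs : 0 ≤ s) :
    ∫ ω, Real.exp (-s * X ω) ∂P ≤ 1 := by
  simpa using integral_mono (integrable_exp_neg_mul hX hX_nonneg hs)
    (integrable_const (μ := P) (1 : ℝ)) fun ω => exp_neg_mul_le_one hs (hX_nonneg ω)

theorem continuousOn_integral_exp_neg_mul [IsProbabilityMeasure P] (hX : Measurable X)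
    (hX_nonneg : ∀ ω, 0 ≤ X ω) :
    ContinuousOn (fun s : ℝ => ∫ ω, Real.exp (-s * X ω) ∂P) (Set.Ici 0) := by
  refine continuousOn_of_dominated (bound := fun _ => 1) (fun s _ => by fun_prop)
    (fun s hs => .of_forall fun ω => ?_) (integrable_const _)
    (.of_forall fun ω => by fun_prop)
  rw [Real.norm_of_nonneg (Real.exp_pos _).le]
  exact exp_neg_mul_le_one hs (hX_nonneg ω)

theorem norm_mul_exp_neg_mul_le {s x : ℝ} (hs : 0 ≤ s) (hx : 0 ≤ x) :
    ‖x * Real.exp (-s * x)‖ ≤ x := by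
  rw [Real.norm_of_nonneg (mul_nonneg hx (Real.exp_pos _).le)]
  exact mul_le_of_le_one_right hx (exp_neg_mul_le_one hs hx)

theorem continuousOn_integral_mul_exp_neg_mul (hX : Measurable X)
    (hX_nonneg : ∀ ω, 0 ≤ X ω) (hX_int : Integrable X P) :
    ContinuousOn (fun s : ℝ => ∫ ω, X ω * Real.exp (-s * X ω) ∂P) (Set.Ici 0) :=
  continuousOn_of_dominated (bound := X) (fun s _ => by fun_prop)
    (fun _ hs => .of_forall fun ω => norm_mul_exp_neg_mul_le hs (hX_nonneg ω)) hX_int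
    (.of_forall fun ω => by fun_prop)

theorem hasDerivAt_integral_exp_neg_mul [IsProbabilityMeasure P] (hX : Measurable X)
    (hX_nonneg : ∀ ω, 0 ≤ X ω) (hX_int : Integrable X P) {s : ℝ} (hs : 0 < s) :
    HasDerivAt (fun s : ℝ => ∫ ω, Real.exp (-s * X ω) ∂P)
      (-∫ ω, X ω * Real.exp (-s * X ω) ∂P) s := by
  rw [← integral_neg]
  refine (hasDerivAt_integral_of_dominated_loc_of_deriv_le (bound := X)
    (F' := fun t ω => -(X ω * Real.exp (-t * X ω))) (Ioi_mem_nhds hs)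
    (.of_forall fun t => by fun_prop) (integrable_exp_neg_mul hX hX_nonneg hs.le)
    (by fun_prop) (.of_forall fun ω t ht => ?_) hX_int (.of_forall fun ω t _ => ?_)).2
  · rw [norm_neg]
    exact norm_mul_exp_neg_mul_le (le_of_lt ht) (hX_nonneg ω)
  · exact ((hasDerivAt_neg t).mul_const (X ω)).exp.congr_deriv (by ring)

/-- The ratio of the Laplace transforms of the size-biased law and of the law itself is
continuous on `[0, ∞)`. -/
theorem continuousOn_sizeBiased_ratio [IsProbabilityMeasure P] (hX : Measurable X)
    (hX_nonneg : ∀ ω, 0 ≤ X ω) (hX_int : Integrable X P) {a : ℝ} (ha : 0 < a) :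
    ContinuousOn (fun s : ℝ => (∫ x, Real.exp (-s * x) ∂(sizeBiasedLaw (P.map X) a)) /
      ∫ ω, Real.exp (-s * X ω) ∂P) (Set.Ici 0) := by
  refine ContinuousOn.div ?_ (continuousOn_integral_exp_neg_mul hX hX_nonneg)
    fun s hs => (integral_exp_neg_mul_pos hX hX_nonneg hs).ne'
  refine ((continuousOn_integral_mul_exp_neg_mul hX hX_nonneg hX_int).const_mul a⁻¹).congr
    fun s _ => ?_
  exact integral_sizeBiasedLaw_map hX hX_nonneg ha (f := fun x => Real.exp (-s * x)) (by fun_prop)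

/-- The logarithm of the Laplace transform as an integral of the size-biased ratio. -/
theorem mul_integral_sizeBiased_ratio [IsProbabilityMeasure P] (hX : Measurable X)
    (hX_nonneg : ∀ ω, 0 ≤ X ω) (hX_int : Integrable X P) {a : ℝ} (ha : 0 < a)
    {l : ℝ} (hl : 0 ≤ l) :
    a * ∫ s in (0 : ℝ)..l, (∫ x, Real.exp (-s * x) ∂(sizeBiasedLaw (P.map X) a)) /
      ∫ ω, Real.exp (-s * X ω) ∂P = -Real.log (∫ ω, Real.exp (-l * X ω) ∂P) := by
  have hcont := continuousOn_integral_exp_neg_mul (P := P) hX hX_nonneg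
  rw [← intervalIntegral.integral_const_mul,
    intervalIntegral.integral_eq_sub_of_hasDerivAt_of_le
      (f := fun s => -Real.log (∫ ω, Real.exp (-s * X ω) ∂P)) hl]
  · simp
  · exact ((hcont.log fun s hs => (integral_exp_neg_mul_pos hX hX_nonneg hs).ne').neg).mono
      Set.Icc_subset_Ici_self
  · intro s hs
    rw [integral_sizeBiasedLaw_map hX hX_nonneg ha (f := fun x => Real.exp (-s * x))
      (by fun_prop)]
    refine ((hasDerivAt_integral_exp_neg_mul hX hX_nonneg hX_int hs.1).log
      (integral_exp_neg_mul_pos hX hX_nonneg hs.1.le).ne').neg.congr_deriv ?_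
    rw [neg_div, neg_neg, mul_div_assoc, mul_inv_cancel_left₀ ha.ne']
  · refine ContinuousOn.intervalIntegrable_of_Icc hl ?_
    exact ((continuousOn_sizeBiased_ratio hX hX_nonneg hX_int ha).const_mul a).mono
      Set.Icc_subset_Ici_self

end Laplace

/-- The logarithm expands distances on `(0, 1]`. -/
theorem abs_sub_le_abs_log_sub_log {x y : ℝ} (hx : 0 < x) (hx1 : x ≤ 1) (hy : 0 < y)
    (hy1 : y ≤ 1) : |x - y| ≤ |Real.log x - Real.log y| := by
  wlog h : y ≤ x generalizing x y
  · rw [abs_sub_comm x, abs_sub_comm (Real.log x)]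
    exact this hy hy1 hx hx1 (le_of_not_ge h)
  rw [abs_of_nonneg (sub_nonneg.2 h), abs_of_nonneg (sub_nonneg.2 (Real.log_le_log hy h))]
  have h1 := Real.log_le_sub_one_of_pos (div_pos hy hx)
  rw [Real.log_div hy.ne' hx.ne'] at h1
  have h2 : x - y ≤ (x - y) / x := le_div_self (sub_nonneg.2 h) hx hx1
  rw [sub_div, div_self hx.ne'] at h2
  linarith

theorem stmt_2 {Ω : Type*} [MeasureSpace Ω] (P : Measure Ω) [IsProbabilityMeasure P]
    (X₀ X₁ : Ω → ℝ) (hX₀ : Measurable X₀) (hX₁ : Measurable X₁)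
    (hX₀_nonneg : ∀ ω, 0 ≤ X₀ ω) (hX₁_nonneg : ∀ ω, 0 ≤ X₁ ω)
    (hX₀_int : Integrable X₀ P) (hX₁_int : Integrable X₁ P)
    (a : ℝ) (ha : 0 < a) (ha₀ : ∫ ω, X₀ ω ∂P = a) (ha₁ : ∫ ω, X₁ ω ∂P = a)
    (F₀ F₁ : ℝ → ℝ)
    (hF₀ : ∀ l : ℝ, F₀ l =
      (∫ x, Real.exp (-l * x) ∂(sizeBiasedLaw (P.map X₀) a)) /
        (∫ ω, Real.exp (-l * X₀ ω) ∂P))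
    (hF₁ : ∀ l : ℝ, F₁ l =
      (∫ x, Real.exp (-l * x) ∂(sizeBiasedLaw (P.map X₁) a)) /
        (∫ ω, Real.exp (-l * X₁ ω) ∂P)) :
    ∀ l : ℝ, 0 ≤ l →
      |(∫ ω, Real.exp (-l * X₀ ω) ∂P) - ∫ ω, Real.exp (-l * X₁ ω) ∂P| ≤
        a * ∫ s in (0:ℝ)..l, |F₀ s - F₁ s| := by
  intro l hl
  have hc₀ := continuousOn_sizeBiased_ratio hX₀ hX₀_nonneg hX₀_int ha
  have hc₁ := continuousOn_sizeBiased_ratio hX₁ hX₁_nonneg hX₁_int ha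
  have hI₀ := mul_integral_sizeBiased_ratio hX₀ hX₀_nonneg hX₀_int ha hl
  have hI₁ := mul_integral_sizeBiased_ratio hX₁ hX₁_nonneg hX₁_int ha hl
  simp only [← hF₀] at hc₀ hI₀
  simp only [← hF₁] at hc₁ hI₁
  have hi₀ : IntervalIntegrable F₀ volume 0 l :=
    (hc₀.mono Set.Icc_subset_Ici_self).intervalIntegrable_of_Icc hl
  have hi₁ : IntervalIntegrable F₁ volume 0 l :=
    (hc₁.mono Set.Icc_subset_Ici_self).intervalIntegrable_of_Icc hl
  calc _ ≤ |Real.log (∫ ω, Real.exp (-l * X₀ ω) ∂P) -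
          Real.log (∫ ω, Real.exp (-l * X₁ ω) ∂P)| :=
        abs_sub_le_abs_log_sub_log (integral_exp_neg_mul_pos hX₀ hX₀_nonneg hl)
          (integral_exp_neg_mul_le_one hX₀ hX₀_nonneg hl)
          (integral_exp_neg_mul_pos hX₁ hX₁_nonneg hl)
          (integral_exp_neg_mul_le_one hX₁ hX₁_nonneg hl)
    _ = a * |∫ s in (0 : ℝ)..l, (F₀ s - F₁ s)| := by
        rw [show ∀ y, a * |y| = |a * y| from fun y => by rw [abs_mul, abs_of_pos ha],
          intervalIntegral.integral_sub hi₀ hi₁,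
          mul_sub, hI₀, hI₁, neg_sub_neg, abs_sub_comm]
    _ ≤ a * ∫ s in (0 : ℝ)..l, |F₀ s - F₁ s| := by
        gcongr
        exact intervalIntegral.abs_integral_le_integral_abs hl
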